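/- Let g be a smooth Riemannian metric on E = ℝ² \ B̄(0,1) that is asymptotic to the flat cone metric of parameter P > 0 in the sense that g − g_cone ∈ O₂((x²+y²)^{−ε}) for some ε > 0. Then there exists R₀ > 1 such that for all R ≥ R₀, the circle γ_R = {x² + y² = R²}, oriented with inward normal pointing toward the origin, has strictly positive geodesic curvature with respect to g at every point. -/

import Mathlib

open Real MeasureTheory Filter Topology Matrix
open scoped BigOperators

noncomputable section

/-- Points of the plane. -/
abbrev Pt := ℝ × ℝ

/-- A (coordinate expression of a) metric on (a subset of) the plane:
a field of `2 × 2` matrices. -/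
abbrev Met := Pt → Matrix (Fin 2) (Fin 2) ℝ

/-- Euclidean radius of a point of the plane. -/
def rad (p : Pt) : ℝ := Real.sqrt (p.1 ^ 2 + p.2 ^ 2)

/-- The standard coordinate directions. -/
def e2 : Fin 2 → Pt := ![(1, 0), (0, 1)]

/-- Partial derivative in the `i`-th coordinate direction. -/
def pd (i : Fin 2) (f : Pt → ℝ) (p : Pt) : ℝ := fderiv ℝ f p (e2 i)

/-- Second partial derivatives. -/
def pd2 (i j : Fin 2) (f : Pt → ℝ) (p : Pt) : ℝ := pd i (fun q => pd j f q) p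

/-- Christoffel symbols `Γ^k_{ij}` of the Levi-Civita connection of `g`. -/
def christoffel (g : Met) (k i j : Fin 2) (p : Pt) : ℝ :=
  (1 / 2) * ∑ l : Fin 2, (g p)⁻¹ k l *
    (pd i (fun q => g q l j) p + pd j (fun q => g q l i) p - pd l (fun q => g q i j) p)

/-- Curvature tensor `R^l_{ijk}` of the Levi-Civita connection of `g`. -/
def riem (g : Met) (l i j k : Fin 2) (p : Pt) : ℝ :=
  pd i (fun q => christoffel g l j k q) p - pd j (fun q => christoffel g l i k q) p
    + ∑ m : Fin 2, (christoffel g l i m p * christoffel g m j k p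
        - christoffel g l j m p * christoffel g m i k p)

/-- Gaussian curvature `K = R_{0101} / det g`. -/
def gaussCurv (g : Met) (p : Pt) : ℝ :=
  (∑ l : Fin 2, g p 0 l * riem g l 1 0 1 p) / (g p).det

/-- Scalar curvature of a two-dimensional metric: twice the Gaussian curvature. -/
def scalCurv (g : Met) (p : Pt) : ℝ := 2 * gaussCurv g p

/-- The inner product of two tangent vectors with respect to `g` at `p`. -/
def innerG (g : Met) (p : Pt) (u v : Fin 2 → ℝ) : ℝ :=
  ∑ i : Fin 2, ∑ j : Fin 2, g p i j * u i * v j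

/-- The length of a tangent vector with respect to `g` at `p`. -/
def normG (g : Met) (p : Pt) (u : Fin 2 → ℝ) : ℝ := Real.sqrt (innerG g p u u)

/-- Velocity (coordinate derivative) of a curve in the plane. -/
def vel (c : ℝ → Pt) (t : ℝ) : Fin 2 → ℝ :=
  ![deriv (fun s => (c s).1) t, deriv (fun s => (c s).2) t]

/-- Covariant acceleration `(∇_{c'} c')^k` of a curve with respect to `g`. -/
def accel (g : Met) (c : ℝ → Pt) (t : ℝ) : Fin 2 → ℝ := fun k =>
  deriv (fun s => vel c s k) t
    + ∑ i : Fin 2, ∑ j : Fin 2, christoffel g k i j (c t) * vel c t i * vel c t j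

/-- Rotation by 90 degrees with respect to the metric `g` and the standard
orientation of the plane (`g(Ju, v) = ω(u, v)` for the Riemannian area form `ω`),
with the sign convention making the outward-oriented Euclidean circle have
geodesic curvature `+1/R`. -/
def Jrot (g : Met) (p : Pt) (u : Fin 2 → ℝ) : Fin 2 → ℝ := fun i =>
  Real.sqrt (g p).det * ∑ k : Fin 2, (g p)⁻¹ i k * (if k = 0 then -u 1 else u 0)

/-- Geodesic curvature of a curve `c` at time `t` with respect to `g`. -/
def geodCurv (g : Met) (c : ℝ → Pt) (t : ℝ) : ℝ :=
  innerG g (c t) (accel g c t) (Jrot g (c t) (vel c t)) / (normG g (c t) (vel c t)) ^ 3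

/-- Speed of a curve with respect to `g`. -/
def speedG (g : Met) (c : ℝ → Pt) (t : ℝ) : ℝ := normG g (c t) (vel c t)

/-- Total geodesic curvature `∫ κ ds` of a curve over the parameter range `[a,b]`. -/
def totalGeodCurv (g : Met) (c : ℝ → Pt) (a b : ℝ) : ℝ :=
  ∫ t in a..b, geodCurv g c t * speedG g c t

/-- The length of a curve with respect to `g`. -/
def lengthG (g : Met) (c : ℝ → Pt) (a b : ℝ) : ℝ := ∫ t in a..b, speedG g c t

/-- The "quasilocal mass" of a loop `c` of period `T`: the angle defect
`2π - ∫_γ κ ds` (equivalently, by Gauss–Bonnet, the angle defect of the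
holonomy of parallel transport around the loop). -/
def qlm (g : Met) (c : ℝ → Pt) (T : ℝ) : ℝ := 2 * π - totalGeodCurv g c 0 T

/-- The round circle of radius `R`. -/
def circleC (R : ℝ) : ℝ → Pt := fun t => (R * Real.cos t, R * Real.sin t)

/-- The flat cone metric of parameter `P`, i.e. `dr² + P²r²dθ²`, written in
Cartesian coordinates: `dx² + dy² - ((1-P²)/(x²+y²)) (x dy - y dx)²`. -/
def coneMetric (P : ℝ) : Met := fun p =>
  !![1 - (1 - P ^ 2) * p.2 ^ 2 / (p.1 ^ 2 + p.2 ^ 2),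
      (1 - P ^ 2) * p.1 * p.2 / (p.1 ^ 2 + p.2 ^ 2);
     (1 - P ^ 2) * p.1 * p.2 / (p.1 ^ 2 + p.2 ^ 2),
      1 - (1 - P ^ 2) * p.1 ^ 2 / (p.1 ^ 2 + p.2 ^ 2)]

/-- The flat cylinder metric `dr² + p²dθ²` (cone parameter `P = 0`),
in Cartesian coordinates on the exterior region. -/
def cylMetric (pc : ℝ) : Met := fun q =>
  !![q.1 ^ 2 / (q.1 ^ 2 + q.2 ^ 2) + pc ^ 2 * q.2 ^ 2 / (q.1 ^ 2 + q.2 ^ 2) ^ 2,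
      q.1 * q.2 / (q.1 ^ 2 + q.2 ^ 2) - pc ^ 2 * q.1 * q.2 / (q.1 ^ 2 + q.2 ^ 2) ^ 2;
     q.1 * q.2 / (q.1 ^ 2 + q.2 ^ 2) - pc ^ 2 * q.1 * q.2 / (q.1 ^ 2 + q.2 ^ 2) ^ 2,
      q.2 ^ 2 / (q.1 ^ 2 + q.2 ^ 2) + pc ^ 2 * q.1 ^ 2 / (q.1 ^ 2 + q.2 ^ 2) ^ 2]

/-- The exterior region `ℝ² \ B̄(0,1)`. -/
def ExtSet : Set Pt := {p | 1 < rad p}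

/-- `g` is a smooth Riemannian metric on `U`. -/
def IsMetricOn (g : Met) (U : Set Pt) : Prop :=
  (∀ i j : Fin 2, ContDiffOn ℝ (⊤ : ℕ∞) (fun p => g p i j) U) ∧
    ∀ p ∈ U, (g p).IsSymm ∧ (g p).PosDef

/-- The decay condition `O₂(r^{-2ε})` for a matrix-valued field, beyond radius `R₀`:
`|f| + r|∂f| + r²|∂²f| ≤ C r^{-2ε}`. -/
def IsO2Decay (h : Pt → Matrix (Fin 2) (Fin 2) ℝ) (ε R₀ : ℝ) : Prop :=
  ∃ C > 0, ∀ p : Pt, R₀ < rad p → ∀ i j : Fin 2,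
    |h p i j| + rad p * ∑ k : Fin 2, |pd k (fun q => h q i j) p|
      + rad p ^ 2 * ∑ k : Fin 2, ∑ l : Fin 2, |pd2 k l (fun q => h q i j) p|
      ≤ C * rad p ^ (-(2 * ε))

/-- `V` is a parallel vector field along the curve `c`, for the Levi-Civita
connection of `g`: `dV^k/dt + Γ^k_{ij} (c')^i V^j = 0`. -/
def IsParallel (g : Met) (c : ℝ → Pt) (V : ℝ → Fin 2 → ℝ) : Prop :=
  ∀ t : ℝ, ∀ k : Fin 2,
    deriv (fun s => V s k) t
      + ∑ i : Fin 2, ∑ j : Fin 2, christoffel g k i j (c t) * vel c t i * V t j = 0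

/-- The holonomy of parallel transport of `g` around the loop `c : [0,T]` is
rotation by the angle `α`: in some positively oriented `g`-orthonormal frame at
the base point, parallel transport acts as the rotation matrix of angle `α`. -/
def IsHolonomyRotation (g : Met) (c : ℝ → Pt) (T α : ℝ) : Prop :=
  ∃ u v : Fin 2 → ℝ,
    innerG g (c 0) u u = 1 ∧ innerG g (c 0) v v = 1 ∧ innerG g (c 0) u v = 0 ∧
    0 < u 0 * v 1 - u 1 * v 0 ∧
    ∃ U V : ℝ → Fin 2 → ℝ, IsParallel g c U ∧ IsParallel g c V ∧
      U 0 = u ∧ V 0 = v ∧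
      (U T = fun k => Real.cos α * u k + Real.sin α * v k) ∧
      (V T = fun k => -Real.sin α * u k + Real.cos α * v k)

/-- The loop `c : [0,T]` winds once (positively) around the point `z`. -/
def WindsOnceAround (c : ℝ → Pt) (T : ℝ) (z : Pt) : Prop :=
  ∃ ρ θ : ℝ → ℝ, Continuous ρ ∧ Continuous θ ∧ (∀ t, 0 < ρ t) ∧
    (∀ t, c t - z = (ρ t * Real.cos (θ t), ρ t * Real.sin (θ t))) ∧
    θ T = θ 0 + 2 * π

/-- `c` is a smooth simple closed curve of period `T`. -/
def IsSimpleClosedCurve (c : ℝ → Pt) (T : ℝ) : Prop :=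
  ContDiff ℝ (⊤ : ℕ∞) c ∧ 0 < T ∧ (∀ t, c (t + T) = c t) ∧
    (∀ t, vel c t ≠ 0) ∧ Set.InjOn c (Set.Ico 0 T)


/-- Jacobian matrix `∂F^i/∂x^j` of a map of the plane. -/
def jac (F : Pt → Pt) (p : Pt) : Matrix (Fin 2) (Fin 2) ℝ := fun i j =>
  pd j (fun q => if i = 0 then (F q).1 else (F q).2) p

/-- Pullback `F*h = Jᵀ (h ∘ F) J` of a metric under a map of the plane. -/
def pullMet (F : Pt → Pt) (h : Met) : Met := fun p =>
  (jac F p)ᵀ * h (F p) * jac F p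

/-- A topological surface, possibly with boundary, given by an atlas of charts
into the closed upper half plane, with smooth transition maps. -/
structure Surface0 where
  M : Type
  ts : TopologicalSpace M
  t2 : @T2Space M ts
  charts : Set (PartialHomeomorph M Pt)
  cover : ∀ x : M, ∃ φ ∈ charts, x ∈ φ.source
  target_eq : ∀ φ ∈ charts, ∃ U : Set Pt, IsOpen U ∧ φ.target = U ∩ {p : Pt | 0 ≤ p.2}
  smooth_trans : ∀ φ ∈ charts, ∀ ψ ∈ charts,
    ContDiffOn ℝ (⊤ : ℕ∞) (ψ ∘ φ.symm) (φ.target ∩ φ.symm ⁻¹' ψ.source)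

attribute [instance] Surface0.ts Surface0.t2

/-- A Riemannian surface: a surface together with, in each chart, a coordinate
expression for the metric, compatible under pullback by transition maps. -/
structure Surface extends Surface0 where
  gM : PartialHomeomorph M Pt → Met
  metric : ∀ φ ∈ charts, IsMetricOn (gM φ) φ.target
  compat : ∀ φ ∈ charts, ∀ ψ ∈ charts, ∀ p ∈ φ.target ∩ φ.symm ⁻¹' ψ.source,
    gM φ p = pullMet (ψ ∘ φ.symm) (gM ψ) p

/-- A distinguished chart at each point. -/
def Surface0.chartAt (S : Surface0) (x : S.M) : PartialHomeomorph S.M Pt :=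
  (S.cover x).choose

lemma Surface0.chartAt_mem (S : Surface0) (x : S.M) : S.chartAt x ∈ S.charts :=
  (S.cover x).choose_spec.1

lemma Surface0.mem_chartAt_source (S : Surface0) (x : S.M) : x ∈ (S.chartAt x).source :=
  (S.cover x).choose_spec.2

/-- The Gaussian curvature of a Riemannian surface, computed in a chart. -/
def Surface.curv (S : Surface) (x : S.M) : ℝ :=
  gaussCurv (S.gM (S.chartAt x)) (S.chartAt x x)

/-- The scalar curvature (twice the Gaussian curvature). -/
def Surface.scal (S : Surface) (x : S.M) : ℝ := 2 * S.curv x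

/-- The boundary of a surface: points mapped by some chart to `{y = 0}`. -/
def Surface0.boundary (S : Surface0) : Set S.M :=
  {x | ∃ φ ∈ S.charts, x ∈ φ.source ∧ (φ x).2 = 0}

/-- A surface is boundaryless if its boundary is empty. -/
def Surface0.Boundaryless (S : Surface0) : Prop := S.boundary = ∅

/-- Orientability: some subatlas covers the surface and has orientation
preserving (positive Jacobian determinant) transition maps. -/
def Surface0.Orientable (S : Surface0) : Prop :=
  ∃ A ⊆ S.charts, (∀ x : S.M, ∃ φ ∈ A, x ∈ φ.source) ∧
    ∀ φ ∈ A, ∀ ψ ∈ A, ∀ p ∈ φ.target ∩ φ.symm ⁻¹' ψ.source,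
      0 < (jac (ψ ∘ φ.symm) p).det

/-- A curve in a surface that is smooth when read in any chart. -/
def Surface0.SmoothCurve (S : Surface0) (c : ℝ → S.M) : Prop :=
  Continuous c ∧ ∀ t : ℝ, ∀ φ ∈ S.charts, c t ∈ φ.source →
    ContDiffAt ℝ (⊤ : ℕ∞) (fun s => φ (c s)) t

/-- The speed of a curve in a surface, using the distinguished chart. -/
def Surface.speed (S : Surface) (c : ℝ → S.M) (t : ℝ) : ℝ :=
  speedG (S.gM (S.chartAt (c t))) (fun s => S.chartAt (c t) (c s)) t

/-- The Riemannian length of a curve in a surface. -/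
def Surface.length (S : Surface) (c : ℝ → S.M) (a b : ℝ) : ℝ :=
  ∫ t in a..b, S.speed c t

/-- The Riemannian distance on a surface. -/
def Surface.dist (S : Surface) (x y : S.M) : ℝ :=
  sInf {L : ℝ | ∃ c : ℝ → S.M, S.toSurface0.SmoothCurve c ∧ c 0 = x ∧ c 1 = y ∧
    L = S.length c 0 1}

/-- Metric completeness of a Riemannian surface: every Cauchy sequence for the
Riemannian distance converges. -/
def Surface.Complete (S : Surface) : Prop :=
  ∀ u : ℕ → S.M,
    (∀ ε > (0:ℝ), ∃ N : ℕ, ∀ m ≥ N, ∀ n ≥ N, S.dist (u m) (u n) < ε) →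
    ∃ x : S.M, ∀ ε > (0:ℝ), ∃ N : ℕ, ∀ n ≥ N, S.dist (u n) x < ε

/-- A homeomorphism of a surface region to a subset of the plane is smooth if it
and its inverse are smooth when read in all charts. -/
def Surface0.SmoothPH (S : Surface0) (f : PartialHomeomorph S.M Pt) : Prop :=
  (∀ φ ∈ S.charts, ContDiffOn ℝ (⊤ : ℕ∞) (f ∘ φ.symm) (φ.target ∩ φ.symm ⁻¹' f.source)) ∧
  (∀ φ ∈ S.charts, ContDiffOn ℝ (⊤ : ℕ∞) (φ ∘ f.symm) (f.target ∩ f.symm ⁻¹' φ.source))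

/-- The surface region `E` is an asymptotically conical end of cone parameter
`P` and decay rate `ε`: it is diffeomorphic to `ℝ² \ B̄(0,1)`, carrying (the
coordinate expression of) the metric `gE` with
`gE - [dx² + dy² - ((1-P²)/(x²+y²))(x dy - y dx)²] ∈ O₂((x²+y²)^{-ε})`. -/
def Surface.IsConicalEnd (S : Surface) (E : Set S.M) (P ε : ℝ) : Prop :=
  ∃ f : PartialHomeomorph S.M Pt, f.source = E ∧ f.target = ExtSet ∧
    S.toSurface0.SmoothPH f ∧
    ∃ gE : Met, IsMetricOn gE ExtSet ∧
      (∀ φ ∈ S.charts, ∀ p ∈ φ.target ∩ φ.symm ⁻¹' E,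
        S.gM φ p = pullMet (f ∘ φ.symm) gE p) ∧
      IsO2Decay (fun p => gE p - coneMetric P p) ε 1

/-- Likewise, an asymptotically cylindrical end: the model is `dr² + p²dθ²`. -/
def Surface.IsCylindricalEnd (S : Surface) (E : Set S.M) (pc ε : ℝ) : Prop :=
  ∃ f : PartialHomeomorph S.M Pt, f.source = E ∧ f.target = ExtSet ∧
    S.toSurface0.SmoothPH f ∧
    ∃ gE : Met, IsMetricOn gE ExtSet ∧
      (∀ φ ∈ S.charts, ∀ p ∈ φ.target ∩ φ.symm ⁻¹' E,
        S.gM φ p = pullMet (f ∘ φ.symm) gE p) ∧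
      IsO2Decay (fun p => gE p - cylMetric pc p) ε 1

/-- The set of connected components of the complement of `K`. -/
def compsOutside (X : Type) [TopologicalSpace X] (K : Set X) : Set (Set X) :=
  {C | ∃ x ∈ Kᶜ, C = connectedComponentIn Kᶜ x}

/-- A surface is asymptotically conical if outside some compact set it has
finitely many connected components, each an asymptotically conical end. -/
def Surface.AsympConical (S : Surface) : Prop :=
  ∃ K : Set S.M, IsCompact K ∧ K ≠ Set.univ ∧
    (compsOutside S.M K).Finite ∧
    ∀ E ∈ compsOutside S.M K, ∃ P > (0:ℝ), ∃ ε > (0:ℝ), S.IsConicalEnd E P ε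

/-- A surface is asymptotically cylindrical if outside some compact set it has
finitely many connected components, each an asymptotically cylindrical end. -/
def Surface.AsympCylindrical (S : Surface) : Prop :=
  ∃ K : Set S.M, IsCompact K ∧ K ≠ Set.univ ∧
    (compsOutside S.M K).Finite ∧
    ∀ E ∈ compsOutside S.M K, ∃ pc > (0:ℝ), ∃ ε > (0:ℝ), S.IsCylindricalEnd E pc ε

/-- A (noncompact) space has exactly one end. -/
def HasOneEnd (X : Type) [TopologicalSpace X] : Prop :=
  (¬ IsCompact (Set.univ : Set X)) ∧
  ∀ K : Set X, IsCompact K → ∃ K' : Set X, IsCompact K' ∧ K ⊆ K' ∧ IsConnected K'ᶜ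

/-- The components of the complement of `K` with noncompact closure. -/
def unbCompsOutside (X : Type) [TopologicalSpace X] (K : Set X) : Set (Set X) :=
  {C | ∃ x ∈ Kᶜ, C = connectedComponentIn Kᶜ x ∧ ¬ IsCompact (closure C)}

/-- A space has exactly `n` ends. -/
def HasEnds (X : Type) [TopologicalSpace X] (n : ℕ) : Prop :=
  ∃ K : Set X, IsCompact K ∧ ∀ K' : Set X, IsCompact K' → K ⊆ K' →
    (unbCompsOutside X K').ncard = n

/-- The Borel σ-algebra on a surface. -/
instance Surface0.ms (S : Surface0) : MeasurableSpace S.M := borel S.M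

/-- `μ` is the Riemannian measure of the surface `S`: in every chart its
pushforward has density `√(det g)` with respect to Lebesgue measure. -/
def Surface.IsRiemMeasure (S : Surface) (μ : Measure S.M) : Prop :=
  ∀ φ ∈ S.charts, ∀ A : Set Pt, MeasurableSet A → A ⊆ φ.target →
    μ (φ.symm '' A) = ∫⁻ p in A, ENNReal.ofReal (Real.sqrt (S.gM φ p).det)

/-- A diffeomorphism from the surface onto the plane. -/
def Surface0.DiffeoToPlane (S : Surface0) : Prop :=
  ∃ f : S.M ≃ₜ Pt,
    (∀ φ ∈ S.charts, ContDiffOn ℝ (⊤ : ℕ∞) (f ∘ φ.symm) φ.target) ∧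
    (∀ φ ∈ S.charts, ContDiffOn ℝ (⊤ : ℕ∞) (φ ∘ f.symm) (f.symm ⁻¹' φ.source))

/-- An isometry (global diffeomorphism pulling the Euclidean metric back to the
given metric) from the surface onto the Euclidean plane. -/
def Surface.IsometricToPlane (S : Surface) : Prop :=
  ∃ f : S.M ≃ₜ Pt,
    (∀ φ ∈ S.charts, ContDiffOn ℝ (⊤ : ℕ∞) (f ∘ φ.symm) φ.target) ∧
    (∀ φ ∈ S.charts, ContDiffOn ℝ (⊤ : ℕ∞) (φ ∘ f.symm) (f.symm ⁻¹' φ.source)) ∧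
    (∀ φ ∈ S.charts, ∀ p ∈ φ.target,
      S.gM φ p = pullMet (f ∘ φ.symm) (fun _ => (1 : Matrix (Fin 2) (Fin 2) ℝ)) p)

/-- The closed unit disc in the plane (Euclidean). -/
def DiscSet : Set Pt := {p : Pt | rad p ≤ 1}

/-- A diffeomorphism from the surface onto the closed unit disc. -/
def Surface0.DiffeoToDisc (S : Surface0) : Prop :=
  ∃ f : S.M ≃ₜ DiscSet,
    (∀ φ ∈ S.charts, ContDiffOn ℝ (⊤ : ℕ∞) (fun p => ((f (φ.symm p) : Pt))) φ.target) ∧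
    ∃ G : Pt → S.M, (∀ p (hp : p ∈ DiscSet), G p = f.symm ⟨p, hp⟩) ∧
      ∀ φ ∈ S.charts, ContDiffOn ℝ (⊤ : ℕ∞) (fun p => φ (G p)) (DiscSet ∩ G ⁻¹' φ.source)

/-- Euler characteristic via finite simplicial complexes: `χ` is an Euler
characteristic of `X` if `X` is homeomorphic to the space of a finite simplicial
complex with alternating face-count sum `χ`. -/
def HasEulerChar (X : Type) [TopologicalSpace X] (χ : ℤ) : Prop :=
  ∃ (n : ℕ) (K : Geometry.SimplicialComplex ℝ (Fin n → ℝ)) (h : K.faces.Finite),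
    Nonempty (X ≃ₜ K.space) ∧
    χ = ∑ s ∈ h.toFinset, (-1 : ℤ) ^ (s.card - 1)

/-- Points of space `ℝ³`. -/
abbrev Pt3 := Fin 3 → ℝ

/-- The cylinder of radius `r` in `ℝ³`. -/
def CylSet (r : ℝ) : Set Pt3 := {v : Pt3 | (v 0) ^ 2 + (v 1) ^ 2 = r ^ 2}

/-- Pullback of the Euclidean metric of `ℝ³` under a map `F : ℝ² → ℝ³`:
`(F*δ)_{ij} = ∑_k ∂_i F^k ∂_j F^k`. -/
def pull32 (F : Pt → Pt3) : Met := fun p i j =>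
  ∑ k : Fin 3, pd i (fun q => F q k) p * pd j (fun q => F q k) p

/-- An isometry from the surface onto the round cylinder of radius `r` in `ℝ³`
(with its induced, i.e. product, metric). -/
def Surface.IsometricToCylinder (S : Surface) (r : ℝ) : Prop :=
  ∃ f : S.M ≃ₜ CylSet r,
    (∀ φ ∈ S.charts, ∀ k : Fin 3,
      ContDiffOn ℝ (⊤ : ℕ∞) (fun p => ((f (φ.symm p) : Pt3) k)) φ.target) ∧
    (∀ φ ∈ S.charts, ∀ p ∈ φ.target,
      S.gM φ p = pull32 (fun q => (f (φ.symm q) : Pt3)) p)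

/-! Let `n`, `τ` be the Euclidean unit radial and angular vectors; the circle of radius `R` has
velocity `R τ` and Euclidean acceleration `-R n`. The Koszul formula expresses `R κ` through the
values of `g` and of `R ∂g` on the frame `(n, τ)`. On the cone these values do not depend on the
point and give `R κ = 1`; for an asymptotically conical `g` they converge uniformly to the conical
ones, so `R κ → 1` uniformly. -/

section Frame

/-- The Euclidean unit vector in the direction of increasing radius, at polar angle `t`. -/
def radialVec (t : ℝ) : Fin 2 → ℝ := ![Real.cos t, Real.sin t]

/-- The Euclidean unit vector in the direction of increasing angle, at polar angle `t`. -/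
def angularVec (t : ℝ) : Fin 2 → ℝ := ![-Real.sin t, Real.cos t]

lemma abs_radialVec_le_one (t : ℝ) (i : Fin 2) : |radialVec t i| ≤ 1 := by
  fin_cases i
  · exact Real.abs_cos_le_one t
  · exact Real.abs_sin_le_one t

lemma abs_angularVec_le_one (t : ℝ) (i : Fin 2) : |angularVec t i| ≤ 1 := by
  fin_cases i
  · exact (abs_neg _).trans_le (Real.abs_sin_le_one t)
  · exact Real.abs_cos_le_one t

lemma radialVec_dotProduct_self (t : ℝ) : radialVec t ⬝ᵥ radialVec t = 1 := by
  simp [radialVec, ← sq]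

lemma angularVec_dotProduct_self (t : ℝ) : angularVec t ⬝ᵥ angularVec t = 1 := by
  simp [angularVec, ← sq]

lemma radialVec_dotProduct_angularVec (t : ℝ) : radialVec t ⬝ᵥ angularVec t = 0 := by
  simp [radialVec, angularVec, mul_comm]

lemma angularVec_dotProduct_radialVec (t : ℝ) : angularVec t ⬝ᵥ radialVec t = 0 := by
  rw [dotProduct_comm, radialVec_dotProduct_angularVec]

lemma hasDerivAt_angularVec_dotProduct (u : Fin 2 → ℝ) (t : ℝ) :
    HasDerivAt (fun s => angularVec s ⬝ᵥ u) (-(radialVec t ⬝ᵥ u)) t := by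
  simp only [radialVec, angularVec, dotProduct, Fin.sum_univ_two, cons_val_zero, cons_val_one]
  refine (((Real.hasDerivAt_sin t).neg.mul_const (u 0)).add
    ((Real.hasDerivAt_cos t).mul_const (u 1))).congr_deriv ?_
  ring

end Frame

section Circle

lemma hasDerivAt_circleC (R t : ℝ) :
    HasDerivAt (circleC R) ((R • angularVec t) 0, (R • angularVec t) 1) t :=
  ((Real.hasDerivAt_cos t).const_mul R).prodMk ((Real.hasDerivAt_sin t).const_mul R)

lemma hasDerivAt_circleC_radius (R t : ℝ) :
    HasDerivAt (fun r => circleC r t) (radialVec t 0, radialVec t 1) R :=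
  (hasDerivAt_mul_const (Real.cos t)).prodMk (hasDerivAt_mul_const (Real.sin t))

lemma vel_circleC (R t : ℝ) : vel (circleC R) t = R • angularVec t := by
  ext k
  fin_cases k
  · exact ((Real.hasDerivAt_cos t).const_mul R).deriv
  · exact ((Real.hasDerivAt_sin t).const_mul R).deriv

lemma deriv_vel_circleC (R t : ℝ) (k : Fin 2) :
    deriv (fun s => vel (circleC R) s k) t = (-R • radialVec t) k := by
  simp only [vel_circleC]
  fin_cases k
  · simp [radialVec, angularVec]
  · simp [radialVec, angularVec]

lemma circleC_fst_sq_add_snd_sq (R t : ℝ) : (circleC R t).1 ^ 2 + (circleC R t).2 ^ 2 = R ^ 2 := by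
  simp only [circleC]
  linear_combination R ^ 2 * Real.sin_sq_add_cos_sq t

lemma rad_circleC (R t : ℝ) : rad (circleC R t) = |R| := by
  rw [rad, circleC_fst_sq_add_snd_sq, Real.sqrt_sq_eq_abs]

lemma tendsto_circleC_comap_rad :
    Tendsto (fun x : ℝ × ℝ => circleC x.1 x.2) (atTop ×ˢ ⊤) (comap rad atTop) := by
  refine tendsto_comap_iff.2 ((tendsto_abs_atTop_atTop.comp tendsto_fst).congr fun x => ?_)
  exact (rad_circleC x.1 x.2).symm

end Circle

section Metric

variable {g : Met} {p : Pt}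

lemma innerG_eq_dotProduct (g : Met) (p : Pt) (u v : Fin 2 → ℝ) :
    innerG g p u v = u ⬝ᵥ g p *ᵥ v := by
  simp only [innerG, dotProduct, mulVec, Fin.sum_univ_two]
  ring

lemma innerG_add_left (g : Met) (p : Pt) (u v w : Fin 2 → ℝ) :
    innerG g p (u + v) w = innerG g p u w + innerG g p v w := by
  simp only [innerG_eq_dotProduct, add_dotProduct]

lemma innerG_add_right (g : Met) (p : Pt) (u v w : Fin 2 → ℝ) :
    innerG g p u (v + w) = innerG g p u v + innerG g p u w := by
  simp only [innerG_eq_dotProduct, mulVec_add, dotProduct_add]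

lemma innerG_smul_left (g : Met) (p : Pt) (a : ℝ) (u v : Fin 2 → ℝ) :
    innerG g p (a • u) v = a * innerG g p u v := by
  simp only [innerG_eq_dotProduct, smul_dotProduct, smul_eq_mul]

lemma innerG_smul_right (g : Met) (p : Pt) (a : ℝ) (u v : Fin 2 → ℝ) :
    innerG g p u (a • v) = a * innerG g p u v := by
  simp only [innerG_eq_dotProduct, mulVec_smul, dotProduct_smul, smul_eq_mul]

lemma innerG_sub_metric (g h : Met) (p : Pt) (u v : Fin 2 → ℝ) :
    innerG (fun q => g q - h q) p u v = innerG g p u v - innerG h p u v := by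
  simp only [innerG_eq_dotProduct, sub_mulVec, dotProduct_sub]

lemma innerG_inv_mulVec (hsymm : (g p).IsSymm) (hdet : (g p).det ≠ 0) (b v : Fin 2 → ℝ) :
    innerG g p ((g p)⁻¹ *ᵥ b) v = b ⬝ᵥ v := by
  rw [innerG_eq_dotProduct, dotProduct_mulVec, ← mulVec_transpose, hsymm.eq, mulVec_mulVec,
    mul_nonsing_inv _ hdet.isUnit, one_mulVec]

lemma normG_smul (g : Met) (p : Pt) {a : ℝ} (ha : 0 ≤ a) (u : Fin 2 → ℝ) :
    normG g p (a • u) = a * normG g p u := by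
  rw [normG, innerG_smul_left, innerG_smul_right, ← mul_assoc, Real.sqrt_mul (mul_self_nonneg a),
    Real.sqrt_mul_self ha, normG]

lemma det_eq_innerG_frame (g : Met) (p : Pt) (t : ℝ) :
    (g p).det = innerG g p (radialVec t) (radialVec t) * innerG g p (angularVec t) (angularVec t)
      - innerG g p (radialVec t) (angularVec t) * innerG g p (angularVec t) (radialVec t) := by
  simp only [det_fin_two, innerG, radialVec, angularVec, Fin.sum_univ_two, cons_val_zero,
    cons_val_one]
  linear_combination (-(g p 0 0 * g p 1 1 - g p 0 1 * g p 1 0)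
    * (Real.sin t ^ 2 + Real.cos t ^ 2 + 1)) * Real.sin_sq_add_cos_sq t

lemma Jrot_smul (g : Met) (p : Pt) (a : ℝ) (u : Fin 2 → ℝ) :
    Jrot g p (a • u) = a • Jrot g p u := by
  ext i
  simp only [Jrot, Fin.sum_univ_two, Pi.smul_apply, smul_eq_mul, if_true, one_ne_zero, if_false]
  ring

lemma Jrot_angularVec (g : Met) (p : Pt) (t : ℝ) :
    Jrot g p (angularVec t) =
      (-(innerG g p (angularVec t) (angularVec t) / √(g p).det)) • radialVec t
        + (innerG g p (angularVec t) (radialVec t) / √(g p).det) • angularVec t := by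
  have hcs := Real.sin_sq_add_cos_sq t
  ext i
  simp only [Jrot, inv_def, adjugate_fin_two, Ring.inverse_eq_inv', Matrix.smul_apply,
    Pi.add_apply, Pi.smul_apply, smul_eq_mul, Fin.sum_univ_two, if_true, one_ne_zero, if_false,
    innerG, div_eq_mul_inv, ← Real.sqrt_div_self (x := (g p).det), radialVec, angularVec]
  fin_cases i
  · simp only [Fin.zero_eta, of_apply, cons_val', cons_val_zero, cons_val_fin_one, cons_val_one,
      mul_neg, neg_mul, neg_neg]
    linear_combination (√(g p).det * (g p).det⁻¹ *
      (g p 1 1 * Real.cos t - g p 0 1 * Real.sin t)) * hcs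
  · simp only [Fin.mk_one, of_apply, cons_val', cons_val_zero, cons_val_fin_one, cons_val_one,
      mul_neg, neg_mul, neg_neg]
    linear_combination (√(g p).det * (g p).det⁻¹ *
      (g p 0 0 * Real.sin t - g p 1 0 * Real.cos t)) * hcs

end Metric

section Connection

variable {g h : Met} {p : Pt}

/-- The derivative of `g(u, v)` at `p` in the direction `w`, for constant `u` and `v`. -/
def dInnerG (g : Met) (p : Pt) (w u v : Fin 2 → ℝ) : ℝ :=
  ∑ k : Fin 2, ∑ i : Fin 2, ∑ j : Fin 2, pd k (fun q => g q i j) p * w k * u i * v j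

/-- The covariant derivative `∇_u w` at `p` of the constant vector field `w`. -/
def connG (g : Met) (p : Pt) (u w : Fin 2 → ℝ) : Fin 2 → ℝ := fun k =>
  ∑ i : Fin 2, ∑ j : Fin 2, christoffel g k i j p * u i * w j

lemma dInnerG_smul (g : Met) (p : Pt) (a b c : ℝ) (w u v : Fin 2 → ℝ) :
    dInnerG g p (a • w) (b • u) (c • v) = a * b * c * dInnerG g p w u v := by
  simp only [dInnerG, Fin.sum_univ_two, Pi.smul_apply, smul_eq_mul]
  ring

lemma dInnerG_linearComb_direction (g : Met) (p : Pt) (a b : ℝ) (w w' u v : Fin 2 → ℝ) :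
    dInnerG g p (a • w + b • w') u v = a * dInnerG g p w u v + b * dInnerG g p w' u v := by
  simp only [dInnerG, Fin.sum_univ_two, Pi.add_apply, Pi.smul_apply, smul_eq_mul]
  ring

lemma dInnerG_linearComb_left (g : Met) (p : Pt) (a b : ℝ) (w u u' v : Fin 2 → ℝ) :
    dInnerG g p w (a • u + b • u') v = a * dInnerG g p w u v + b * dInnerG g p w u' v := by
  simp only [dInnerG, Fin.sum_univ_two, Pi.add_apply, Pi.smul_apply, smul_eq_mul]
  ring

lemma dInnerG_sub_metric (hg : ∀ i j, DifferentiableAt ℝ (fun q => g q i j) p)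
    (hh : ∀ i j, DifferentiableAt ℝ (fun q => h q i j) p) (w u v : Fin 2 → ℝ) :
    dInnerG (fun q => g q - h q) p w u v = dInnerG g p w u v - dInnerG h p w u v := by
  have hpd (k i j : Fin 2) : pd k (fun q => (g q - h q) i j) p =
      pd k (fun q => g q i j) p - pd k (fun q => h q i j) p :=
    congrArg (fun L : Pt →L[ℝ] ℝ => L (e2 k)) (fderiv_fun_sub (hg i j) (hh i j))
  simp only [dInnerG, hpd, sub_mul, Finset.sum_sub_distrib]

lemma hasDerivAt_comp_of_pd {f : Pt → ℝ} {c : ℝ → Pt} {s : ℝ} {w : Fin 2 → ℝ}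
    (hf : DifferentiableAt ℝ f (c s)) (hc : HasDerivAt c (w 0, w 1) s) :
    HasDerivAt (fun r => f (c r)) (∑ k : Fin 2, pd k f (c s) * w k) s := by
  have hw : ((w 0, w 1) : Pt) = w 0 • e2 0 + w 1 • e2 1 := by simp [e2]
  refine (hf.hasFDerivAt.comp_hasDerivAt s hc).congr_deriv ?_
  simp only [hw, map_add, map_smul, smul_eq_mul, Fin.sum_univ_two, pd, mul_comm]

lemma hasDerivAt_innerG_comp {c : ℝ → Pt} {s : ℝ} {w : Fin 2 → ℝ}
    (hg : ∀ i j, DifferentiableAt ℝ (fun q => g q i j) (c s)) (hc : HasDerivAt c (w 0, w 1) s)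
    (u v : Fin 2 → ℝ) :
    HasDerivAt (fun r => innerG g (c r) u v) (dInnerG g (c s) w u v) s := by
  refine (HasDerivAt.fun_sum fun i _ => HasDerivAt.fun_sum fun j _ =>
    ((hasDerivAt_comp_of_pd (hg i j) hc).mul_const (u i)).mul_const (v j)).congr_deriv ?_
  simp only [dInnerG, Fin.sum_univ_two]
  ring

/-- The Koszul formula for constant vector fields. -/
lemma innerG_connG (hsymm : (g p).IsSymm) (hdet : (g p).det ≠ 0) (u w v : Fin 2 → ℝ) :
    innerG g p (connG g p u w) v =
      1 / 2 * (dInnerG g p u v w + dInnerG g p w v u - dInnerG g p v u w) := by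
  have hconn : connG g p u w = (g p)⁻¹ *ᵥ fun l => 1 / 2 * ∑ i : Fin 2, ∑ j : Fin 2,
      (pd i (fun q => g q l j) p + pd j (fun q => g q l i) p - pd l (fun q => g q i j) p)
        * u i * w j := by
    ext k
    simp only [connG, christoffel, mulVec, dotProduct, Fin.sum_univ_two]
    ring
  rw [hconn, innerG_inv_mulVec hsymm hdet]
  simp only [dInnerG, dotProduct, Fin.sum_univ_two]
  ring

lemma accel_circleC (g : Met) (R t : ℝ) :
    accel g (circleC R) t =
      -R • radialVec t + connG g (circleC R t) (R • angularVec t) (R • angularVec t) := by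
  ext k
  rw [accel, deriv_vel_circleC, vel_circleC]
  rfl

lemma mul_geodCurv_circleC {R t : ℝ} (hR : 0 < R) (hsymm : (g (circleC R t)).IsSymm)
    (hdet : (g (circleC R t)).det ≠ 0) :
    R * geodCurv g (circleC R) t =
      (R * dInnerG g (circleC R t) (angularVec t) (Jrot g (circleC R t) (angularVec t))
          (angularVec t)
        - 1 / 2 * (R * dInnerG g (circleC R t) (Jrot g (circleC R t) (angularVec t))
          (angularVec t) (angularVec t))
        - innerG g (circleC R t) (radialVec t) (Jrot g (circleC R t) (angularVec t)))
      / normG g (circleC R t) (angularVec t) ^ 3 := by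
  rw [geodCurv, accel_circleC, vel_circleC, Jrot_smul, innerG_add_left, innerG_smul_left,
    innerG_smul_right, innerG_connG hsymm hdet, normG_smul _ _ hR.le]
  simp only [dInnerG_smul]
  field_simp
  ring

end Connection

section Cone

lemma differentiableAt_coneMetric (P : ℝ) {p : Pt} (hp : p.1 ^ 2 + p.2 ^ 2 ≠ 0) (i j : Fin 2) :
    DifferentiableAt ℝ (fun q => coneMetric P q i j) p := by
  fin_cases i <;> fin_cases j <;> dsimp [coneMetric] <;> fun_prop (disch := exact hp)

lemma differentiableAt_coneMetric_circleC (P : ℝ) {R : ℝ} (hR : R ≠ 0) (t : ℝ) (i j : Fin 2) :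
    DifferentiableAt ℝ (fun q => coneMetric P q i j) (circleC R t) :=
  differentiableAt_coneMetric P (by rw [circleC_fst_sq_add_snd_sq]; exact pow_ne_zero 2 hR) i j

lemma innerG_coneMetric_circleC (P : ℝ) {R : ℝ} (hR : R ≠ 0) (t : ℝ) (u v : Fin 2 → ℝ) :
    innerG (coneMetric P) (circleC R t) u v =
      u ⬝ᵥ v - (1 - P ^ 2) * ((angularVec t ⬝ᵥ u) * (angularVec t ⬝ᵥ v)) := by
  have hrad : (R * Real.cos t) ^ 2 + (R * Real.sin t) ^ 2 = R ^ 2 := circleC_fst_sq_add_snd_sq R t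
  simp only [innerG, coneMetric, circleC, hrad, of_apply, cons_val', cons_val_fin_one,
    Fin.sum_univ_two, cons_val_zero, cons_val_one, dotProduct, angularVec, neg_mul]
  field_simp
  ring

lemma dInnerG_coneMetric_radialVec (P : ℝ) {R : ℝ} (hR : R ≠ 0) (t : ℝ) (u v : Fin 2 → ℝ) :
    dInnerG (coneMetric P) (circleC R t) (radialVec t) u v = 0 := by
  refine (hasDerivAt_innerG_comp (c := fun r => circleC r t)
    (differentiableAt_coneMetric_circleC P hR t) (hasDerivAt_circleC_radius R t) u v).unique ?_
  refine (hasDerivAt_const R (innerG (coneMetric P) (circleC R t) u v)).congr_of_eventuallyEq ?_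
  filter_upwards [isOpen_ne.mem_nhds hR] with r hr
  rw [innerG_coneMetric_circleC P hr, innerG_coneMetric_circleC P hR]

lemma mul_dInnerG_coneMetric_angularVec (P : ℝ) {R : ℝ} (hR : R ≠ 0) (t : ℝ) (u v : Fin 2 → ℝ) :
    R * dInnerG (coneMetric P) (circleC R t) (angularVec t) u v =
      (1 - P ^ 2) * ((radialVec t ⬝ᵥ u) * (angularVec t ⬝ᵥ v)
        + (angularVec t ⬝ᵥ u) * (radialVec t ⬝ᵥ v)) := by
  have hder := hasDerivAt_innerG_comp (differentiableAt_coneMetric_circleC P hR t)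
    (hasDerivAt_circleC R t) u v
  simp only [innerG_coneMetric_circleC P hR] at hder
  have hscale := dInnerG_smul (coneMetric P) (circleC R t) R 1 1 (angularVec t) u v
  simp only [one_smul, mul_one] at hscale
  rw [← hscale]
  refine hder.unique ((((hasDerivAt_angularVec_dotProduct u t).fun_mul
    (hasDerivAt_angularVec_dotProduct v t)).const_mul (1 - P ^ 2)).const_sub (u ⬝ᵥ v)
    |>.congr_deriv ?_)
  ring

lemma isOpen_ExtSet : IsOpen ExtSet :=
  isOpen_lt continuous_const (by unfold rad; fun_prop)

lemma IsMetricOn.differentiableAt_sub_coneMetric {g : Met} (hg : IsMetricOn g ExtSet) (P : ℝ)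
    {p : Pt} (hp : p ∈ ExtSet) (i j : Fin 2) :
    DifferentiableAt ℝ (fun q => (g q - coneMetric P q) i j) p := by
  have hp0 : p.1 ^ 2 + p.2 ^ 2 ≠ 0 :=
    (Real.sqrt_pos.1 (zero_lt_one.trans hp)).ne'
  exact (((hg.1 i j).contDiffAt (isOpen_ExtSet.mem_nhds hp)).differentiableAt (by simp)).fun_sub
    (differentiableAt_coneMetric P hp0 i j)

end Cone

section Decay

/-- The condition `h = o₁(1)` at infinity: `|h| + r|∂h| → 0` as `r → ∞`. Differentiability is
included because `pd` vanishes where `h` is not differentiable. -/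
structure IsLittleO1 (h : Pt → Matrix (Fin 2) (Fin 2) ℝ) : Prop where
  differentiableAt : ∀ᶠ p in comap rad atTop, ∀ i j, DifferentiableAt ℝ (fun q => h q i j) p
  tendsto_zero : ∀ i j, Tendsto (fun p => h p i j) (comap rad atTop) (𝓝 0)
  tendsto_rad_mul_pd : ∀ k i j,
    Tendsto (fun p => rad p * pd k (fun q => h q i j) p) (comap rad atTop) (𝓝 0)

lemma IsO2Decay.exists_bound {h : Pt → Matrix (Fin 2) (Fin 2) ℝ} {ε R₀ : ℝ}
    (hh : IsO2Decay h ε R₀) :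
    ∃ C, ∀ p, R₀ < rad p → ∀ i j, |h p i j| ≤ C * rad p ^ (-(2 * ε)) ∧
      ∀ k, |rad p * pd k (fun q => h q i j) p| ≤ C * rad p ^ (-(2 * ε)) := by
  obtain ⟨C, -, hC⟩ := hh
  refine ⟨C, fun p hp i j => ?_⟩
  have hrad : 0 ≤ rad p := Real.sqrt_nonneg _
  have hsecond : 0 ≤ rad p ^ 2 * ∑ k : Fin 2, ∑ l : Fin 2, |pd2 k l (fun q => h q i j) p| := by
    positivity
  have hfirst : 0 ≤ rad p * ∑ k : Fin 2, |pd k (fun q => h q i j) p| := by positivity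
  refine ⟨by linarith [hC p hp i j], fun k => ?_⟩
  rw [abs_mul, abs_of_nonneg hrad]
  have hsingle : |pd k (fun q => h q i j) p| ≤ ∑ k : Fin 2, |pd k (fun q => h q i j) p| :=
    Finset.single_le_sum (f := fun k => |pd k (fun q => h q i j) p|)
      (fun _ _ => abs_nonneg _) (Finset.mem_univ k)
  linarith [hC p hp i j, mul_le_mul_of_nonneg_left hsingle hrad, abs_nonneg (h p i j)]

lemma IsO2Decay.isLittleO1 {h : Pt → Matrix (Fin 2) (Fin 2) ℝ} {ε R₀ : ℝ} (hε : 0 < ε)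
    (hh : IsO2Decay h ε R₀)
    (hdiff : ∀ᶠ p in comap rad atTop, ∀ i j, DifferentiableAt ℝ (fun q => h q i j) p) :
    IsLittleO1 h := by
  obtain ⟨C, hC⟩ := hh.exists_bound
  have hlim : Tendsto (fun p => C * rad p ^ (-(2 * ε))) (comap rad atTop) (𝓝 0) := by
    simpa only [mul_zero, Function.comp_def] using
      ((tendsto_rpow_neg_atTop (by positivity : 0 < 2 * ε)).comp tendsto_comap).const_mul C
  have hfar : ∀ᶠ p in comap rad atTop, R₀ < rad p := tendsto_comap.eventually_gt_atTop R₀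
  exact ⟨hdiff, fun i j => squeeze_zero_norm' (hfar.mono fun p hp => (hC p hp i j).1) hlim,
    fun k i j => squeeze_zero_norm' (hfar.mono fun p hp => (hC p hp i j).2 k) hlim⟩

variable {α : Type*} {l : Filter α}

lemma tendsto_mul_zero_of_abs_le_one {f b : α → ℝ} (hf : Tendsto f l (𝓝 0))
    (hb : ∀ a, |b a| ≤ 1) : Tendsto (fun a => f a * b a) l (𝓝 0) :=
  hf.zero_mul_isBoundedUnder_le (isBoundedUnder_of ⟨1, hb⟩)

variable {h : Pt → Matrix (Fin 2) (Fin 2) ℝ} {p : α → Pt} {w u v : α → Fin 2 → ℝ}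

lemma IsLittleO1.tendsto_innerG (hh : IsLittleO1 h) (hp : Tendsto p l (comap rad atTop))
    (hu : ∀ a i, |u a i| ≤ 1) (hv : ∀ a i, |v a i| ≤ 1) :
    Tendsto (fun a => innerG h (p a) (u a) (v a)) l (𝓝 0) := by
  have hterm (i j : Fin 2) : Tendsto (fun a => h (p a) i j * u a i * v a j) l (𝓝 0) :=
    tendsto_mul_zero_of_abs_le_one (tendsto_mul_zero_of_abs_le_one
      ((hh.tendsto_zero i j).comp hp) fun a => hu a i) fun a => hv a j
  simpa only [Finset.sum_const_zero, innerG] using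
    tendsto_finsetSum Finset.univ fun i _ => tendsto_finsetSum Finset.univ fun j _ => hterm i j

lemma IsLittleO1.tendsto_rad_mul_dInnerG (hh : IsLittleO1 h) (hp : Tendsto p l (comap rad atTop))
    (hw : ∀ a i, |w a i| ≤ 1) (hu : ∀ a i, |u a i| ≤ 1) (hv : ∀ a i, |v a i| ≤ 1) :
    Tendsto (fun a => rad (p a) * dInnerG h (p a) (w a) (u a) (v a)) l (𝓝 0) := by
  have hterm (k i j : Fin 2) : Tendsto (fun a =>
      rad (p a) * pd k (fun q => h q i j) (p a) * w a k * u a i * v a j) l (𝓝 0) :=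
    tendsto_mul_zero_of_abs_le_one (tendsto_mul_zero_of_abs_le_one (tendsto_mul_zero_of_abs_le_one
      ((hh.tendsto_rad_mul_pd k i j).comp hp) fun a => hw a k) fun a => hu a i) fun a => hv a j
  simpa only [Finset.sum_const_zero, dInnerG, Finset.mul_sum, ← mul_assoc] using
    tendsto_finsetSum Finset.univ fun k _ => tendsto_finsetSum Finset.univ fun i _ =>
      tendsto_finsetSum Finset.univ fun j _ => hterm k i j

end Decay

section Asymptotics

variable {g : Met} {P : ℝ} {w u v : ℝ → Fin 2 → ℝ} {m : ℝ}

lemma tendsto_innerG_circleC (hg : IsLittleO1 fun p => g p - coneMetric P p)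
    (hu : ∀ t i, |u t i| ≤ 1) (hv : ∀ t i, |v t i| ≤ 1)
    (hcone : ∀ R ≠ 0, ∀ t, innerG (coneMetric P) (circleC R t) (u t) (v t) = m) :
    Tendsto (fun x : ℝ × ℝ => innerG g (circleC x.1 x.2) (u x.2) (v x.2)) (atTop ×ˢ ⊤) (𝓝 m) := by
  have herr := hg.tendsto_innerG tendsto_circleC_comap_rad (u := fun x => u x.2)
    (v := fun x => v x.2) (fun x => hu x.2) (fun x => hv x.2)
  refine (zero_add m ▸ herr.add_const m).congr' ?_
  filter_upwards [tendsto_fst.eventually_ne_atTop (0 : ℝ)] with x hx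
  rw [innerG_sub_metric, hcone x.1 hx, sub_add_cancel]

lemma eventually_differentiableAt_circleC (hg : IsLittleO1 fun p => g p - coneMetric P p) :
    ∀ᶠ x : ℝ × ℝ in atTop ×ˢ ⊤,
      ∀ i j, DifferentiableAt ℝ (fun q => g q i j) (circleC x.1 x.2) := by
  filter_upwards [tendsto_circleC_comap_rad.eventually hg.differentiableAt,
    tendsto_fst.eventually_ne_atTop (0 : ℝ)] with x hdiff hx i j
  simpa only [Matrix.sub_apply, sub_add_cancel] using
    (hdiff i j).fun_add (differentiableAt_coneMetric_circleC P hx x.2 i j)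

lemma tendsto_mul_dInnerG_circleC (hg : IsLittleO1 fun p => g p - coneMetric P p)
    (hw : ∀ t i, |w t i| ≤ 1) (hu : ∀ t i, |u t i| ≤ 1) (hv : ∀ t i, |v t i| ≤ 1)
    (hcone : ∀ R ≠ 0, ∀ t, R * dInnerG (coneMetric P) (circleC R t) (w t) (u t) (v t) = m) :
    Tendsto (fun x : ℝ × ℝ => x.1 * dInnerG g (circleC x.1 x.2) (w x.2) (u x.2) (v x.2))
      (atTop ×ˢ ⊤) (𝓝 m) := by
  have herr := hg.tendsto_rad_mul_dInnerG tendsto_circleC_comap_rad (w := fun x => w x.2)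
    (u := fun x => u x.2) (v := fun x => v x.2) (fun x => hw x.2) (fun x => hu x.2)
    (fun x => hv x.2)
  refine (zero_add m ▸ herr.add_const m).congr' ?_
  filter_upwards [tendsto_fst.eventually_gt_atTop (0 : ℝ),
    eventually_differentiableAt_circleC hg] with x hx hdiff
  rw [dInnerG_sub_metric hdiff (differentiableAt_coneMetric_circleC P hx.ne' x.2), rad_circleC,
    abs_of_pos hx, mul_sub, hcone x.1 hx.ne', sub_add_cancel]

lemma tendsto_innerG_radialVec_radialVec (hg : IsLittleO1 fun p => g p - coneMetric P p) :
    Tendsto (fun x : ℝ × ℝ => innerG g (circleC x.1 x.2) (radialVec x.2) (radialVec x.2))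
      (atTop ×ˢ ⊤) (𝓝 1) :=
  tendsto_innerG_circleC hg abs_radialVec_le_one abs_radialVec_le_one fun R hR t => by
    rw [innerG_coneMetric_circleC P hR, radialVec_dotProduct_self, angularVec_dotProduct_radialVec]
    ring

lemma tendsto_innerG_radialVec_angularVec (hg : IsLittleO1 fun p => g p - coneMetric P p) :
    Tendsto (fun x : ℝ × ℝ => innerG g (circleC x.1 x.2) (radialVec x.2) (angularVec x.2))
      (atTop ×ˢ ⊤) (𝓝 0) :=
  tendsto_innerG_circleC hg abs_radialVec_le_one abs_angularVec_le_one fun R hR t => by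
    rw [innerG_coneMetric_circleC P hR, radialVec_dotProduct_angularVec,
      angularVec_dotProduct_radialVec]
    ring

lemma tendsto_innerG_angularVec_radialVec (hg : IsLittleO1 fun p => g p - coneMetric P p) :
    Tendsto (fun x : ℝ × ℝ => innerG g (circleC x.1 x.2) (angularVec x.2) (radialVec x.2))
      (atTop ×ˢ ⊤) (𝓝 0) :=
  tendsto_innerG_circleC hg abs_angularVec_le_one abs_radialVec_le_one fun R hR t => by
    rw [innerG_coneMetric_circleC P hR, angularVec_dotProduct_radialVec]
    ring

lemma tendsto_innerG_angularVec_angularVec (hg : IsLittleO1 fun p => g p - coneMetric P p) :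
    Tendsto (fun x : ℝ × ℝ => innerG g (circleC x.1 x.2) (angularVec x.2) (angularVec x.2))
      (atTop ×ˢ ⊤) (𝓝 (P ^ 2)) :=
  tendsto_innerG_circleC hg abs_angularVec_le_one abs_angularVec_le_one fun R hR t => by
    rw [innerG_coneMetric_circleC P hR, angularVec_dotProduct_self]
    ring

lemma tendsto_mul_dInnerG_angularVec_radialVec_angularVec
    (hg : IsLittleO1 fun p => g p - coneMetric P p) :
    Tendsto (fun x : ℝ × ℝ => x.1 * dInnerG g (circleC x.1 x.2) (angularVec x.2) (radialVec x.2)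
      (angularVec x.2)) (atTop ×ˢ ⊤) (𝓝 (1 - P ^ 2)) :=
  tendsto_mul_dInnerG_circleC hg abs_angularVec_le_one abs_radialVec_le_one abs_angularVec_le_one
    fun R hR t => by
      rw [mul_dInnerG_coneMetric_angularVec P hR, radialVec_dotProduct_self,
        angularVec_dotProduct_self, angularVec_dotProduct_radialVec]
      ring

lemma tendsto_mul_dInnerG_angularVec_angularVec_angularVec
    (hg : IsLittleO1 fun p => g p - coneMetric P p) :
    Tendsto (fun x : ℝ × ℝ => x.1 * dInnerG g (circleC x.1 x.2) (angularVec x.2) (angularVec x.2)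
      (angularVec x.2)) (atTop ×ˢ ⊤) (𝓝 0) :=
  tendsto_mul_dInnerG_circleC hg abs_angularVec_le_one abs_angularVec_le_one abs_angularVec_le_one
    fun R hR t => by
      rw [mul_dInnerG_coneMetric_angularVec P hR, radialVec_dotProduct_angularVec]
      ring

lemma tendsto_mul_dInnerG_radialVec_angularVec_angularVec
    (hg : IsLittleO1 fun p => g p - coneMetric P p) :
    Tendsto (fun x : ℝ × ℝ => x.1 * dInnerG g (circleC x.1 x.2) (radialVec x.2) (angularVec x.2)
      (angularVec x.2)) (atTop ×ˢ ⊤) (𝓝 0) :=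
  tendsto_mul_dInnerG_circleC hg abs_radialVec_le_one abs_angularVec_le_one abs_angularVec_le_one
    fun R hR t => by rw [dInnerG_coneMetric_radialVec P hR, mul_zero]

lemma tendsto_det_circleC (hg : IsLittleO1 fun p => g p - coneMetric P p) :
    Tendsto (fun x : ℝ × ℝ => (g (circleC x.1 x.2)).det) (atTop ×ˢ ⊤) (𝓝 (P ^ 2)) := by
  have hlim := ((tendsto_innerG_radialVec_radialVec hg).mul
    (tendsto_innerG_angularVec_angularVec hg)).sub
    ((tendsto_innerG_radialVec_angularVec hg).mul (tendsto_innerG_angularVec_radialVec hg))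
  rw [one_mul, zero_mul, sub_zero] at hlim
  exact hlim.congr fun x => (det_eq_innerG_frame g _ x.2).symm

lemma tendsto_sqrt_det_circleC (hP : 0 < P) (hg : IsLittleO1 fun p => g p - coneMetric P p) :
    Tendsto (fun x : ℝ × ℝ => √(g (circleC x.1 x.2)).det) (atTop ×ˢ ⊤) (𝓝 P) := by
  simpa only [Real.sqrt_sq hP.le] using (tendsto_det_circleC hg).sqrt

lemma tendsto_normG_angularVec (hP : 0 < P) (hg : IsLittleO1 fun p => g p - coneMetric P p) :
    Tendsto (fun x : ℝ × ℝ => normG g (circleC x.1 x.2) (angularVec x.2)) (atTop ×ˢ ⊤) (𝓝 P) := by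
  simpa only [normG, Real.sqrt_sq hP.le] using (tendsto_innerG_angularVec_angularVec hg).sqrt

lemma tendsto_radial_coeff_Jrot_angularVec (hP : 0 < P)
    (hg : IsLittleO1 fun p => g p - coneMetric P p) :
    Tendsto (fun x : ℝ × ℝ => -(innerG g (circleC x.1 x.2) (angularVec x.2) (angularVec x.2)
      / √(g (circleC x.1 x.2)).det)) (atTop ×ˢ ⊤) (𝓝 (-P)) := by
  have hlim := ((tendsto_innerG_angularVec_angularVec hg).div
    (tendsto_sqrt_det_circleC hP hg) hP.ne').neg
  rwa [sq, mul_div_cancel_right₀ P hP.ne'] at hlim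

lemma tendsto_angular_coeff_Jrot_angularVec (hP : 0 < P)
    (hg : IsLittleO1 fun p => g p - coneMetric P p) :
    Tendsto (fun x : ℝ × ℝ => innerG g (circleC x.1 x.2) (angularVec x.2) (radialVec x.2)
      / √(g (circleC x.1 x.2)).det) (atTop ×ˢ ⊤) (𝓝 0) := by
  simpa only [zero_div, Pi.div_def] using
    (tendsto_innerG_angularVec_radialVec hg).div (tendsto_sqrt_det_circleC hP hg) hP.ne'

lemma tendsto_innerG_radialVec_Jrot (hP : 0 < P) (hg : IsLittleO1 fun p => g p - coneMetric P p) :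
    Tendsto (fun x : ℝ × ℝ => innerG g (circleC x.1 x.2) (radialVec x.2)
      (Jrot g (circleC x.1 x.2) (angularVec x.2))) (atTop ×ˢ ⊤) (𝓝 (-P)) := by
  have hlim := ((tendsto_radial_coeff_Jrot_angularVec hP hg).mul
    (tendsto_innerG_radialVec_radialVec hg)).add ((tendsto_angular_coeff_Jrot_angularVec hP hg).mul
    (tendsto_innerG_radialVec_angularVec hg))
  rw [mul_one, zero_mul, add_zero] at hlim
  refine hlim.congr fun x => ?_
  rw [Jrot_angularVec g _ x.2, innerG_add_right, innerG_smul_right, innerG_smul_right]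

lemma tendsto_mul_dInnerG_angularVec_Jrot (hP : 0 < P)
    (hg : IsLittleO1 fun p => g p - coneMetric P p) :
    Tendsto (fun x : ℝ × ℝ => x.1 * dInnerG g (circleC x.1 x.2) (angularVec x.2)
      (Jrot g (circleC x.1 x.2) (angularVec x.2)) (angularVec x.2))
      (atTop ×ˢ ⊤) (𝓝 (-P * (1 - P ^ 2))) := by
  have hlim := ((tendsto_radial_coeff_Jrot_angularVec hP hg).mul
    (tendsto_mul_dInnerG_angularVec_radialVec_angularVec hg)).add
    ((tendsto_angular_coeff_Jrot_angularVec hP hg).mul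
    (tendsto_mul_dInnerG_angularVec_angularVec_angularVec hg))
  rw [zero_mul, add_zero] at hlim
  refine hlim.congr fun x => ?_
  rw [Jrot_angularVec g _ x.2, dInnerG_linearComb_left]
  ring

lemma tendsto_mul_dInnerG_Jrot (hP : 0 < P) (hg : IsLittleO1 fun p => g p - coneMetric P p) :
    Tendsto (fun x : ℝ × ℝ => x.1 * dInnerG g (circleC x.1 x.2)
      (Jrot g (circleC x.1 x.2) (angularVec x.2)) (angularVec x.2) (angularVec x.2))
      (atTop ×ˢ ⊤) (𝓝 0) := by
  have hlim := ((tendsto_radial_coeff_Jrot_angularVec hP hg).mul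
    (tendsto_mul_dInnerG_radialVec_angularVec_angularVec hg)).add
    ((tendsto_angular_coeff_Jrot_angularVec hP hg).mul
    (tendsto_mul_dInnerG_angularVec_angularVec_angularVec hg))
  rw [mul_zero, mul_zero, add_zero] at hlim
  refine hlim.congr fun x => ?_
  rw [Jrot_angularVec g _ x.2, dInnerG_linearComb_direction]
  ring

theorem tendstoUniformly_mul_geodCurv_circleC (hP : 0 < P)
    (hsymm : ∀ᶠ p in comap rad atTop, (g p).IsSymm)
    (hg : IsLittleO1 fun p => g p - coneMetric P p) :
    TendstoUniformly (fun R t => R * geodCurv g (circleC R) t) (fun _ => 1) atTop := by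
  rw [← tendsto_prod_top_iff]
  have hlim := (((tendsto_mul_dInnerG_angularVec_Jrot hP hg).sub
    ((tendsto_mul_dInnerG_Jrot hP hg).const_mul (1 / 2))).sub
    (tendsto_innerG_radialVec_Jrot hP hg)).div
    ((tendsto_normG_angularVec hP hg).pow 3) (pow_ne_zero 3 hP.ne')
  have hone : (-P * (1 - P ^ 2) - 1 / 2 * 0 - -P) / P ^ 3 = 1 := by
    field_simp
    ring
  rw [hone] at hlim
  refine hlim.congr' ?_
  filter_upwards [tendsto_fst.eventually_gt_atTop (0 : ℝ),
    tendsto_circleC_comap_rad.eventually hsymm,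
    (tendsto_det_circleC hg).eventually_ne (pow_ne_zero 2 hP.ne')] with x hR hs hdet
  exact (mul_geodCurv_circleC hR hs hdet).symm

end Asymptotics

theorem circles_positive_geodesic_curvature_general (g : Met) (P : ℝ) (hP : 0 < P)
    (hsymm : ∀ᶠ p in comap rad atTop, (g p).IsSymm)
    (hg : IsLittleO1 fun p => g p - coneMetric P p) :
    ∃ R₀ > (1 : ℝ), ∀ R ≥ R₀, ∀ t : ℝ, 0 < geodCurv g (circleC R) t := by
  have hunif := Metric.tendstoUniformly_iff.1
    (tendstoUniformly_mul_geodCurv_circleC hP hsymm hg) 1 one_pos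
  obtain ⟨R₀, hR₀⟩ := eventually_atTop.1 hunif
  refine ⟨max R₀ 2, lt_max_of_lt_right one_lt_two, fun R hR t => ?_⟩
  have hclose := hR₀ R (le_of_max_le_left hR) t
  have hpos : 0 < R * geodCurv g (circleC R) t := by
    rw [Real.dist_eq, abs_sub_lt_iff] at hclose
    linarith
  exact pos_of_mul_pos_right hpos (by linarith [le_of_max_le_right hR])

/-- If `g` on `ℝ² \ B̄(0,1)` is asymptotic to the flat cone metric of
parameter `P > 0` with error in `O₂((x²+y²)^{-ε})`, then there exists `R₀ > 1` such that
for all `R ≥ R₀` the circle of radius `R` (oriented with inward normal toward the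
origin) has strictly positive geodesic curvature at every point. -/
theorem circles_positive_geodesic_curvature (g : Met) (P ε : ℝ)
    (hP : 0 < P) (hε : 0 < ε) (hg : IsMetricOn g ExtSet)
    (hdecay : IsO2Decay (fun p => g p - coneMetric P p) ε 1) :
    ∃ R₀ > (1 : ℝ), ∀ R ≥ R₀, ∀ t : ℝ, 0 < geodCurv g (circleC R) t := by
  have hExt : ∀ᶠ p in comap rad atTop, p ∈ ExtSet := tendsto_comap.eventually_gt_atTop 1
  exact circles_positive_geodesic_curvature_general g P hP (hExt.mono fun p hp => (hg.2 p hp).1)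
    (hdecay.isLittleO1 hε (hExt.mono fun p hp => hg.differentiableAt_sub_coneMetric P hp))

end
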